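/- arXiv:2511.10417 — 3 statements merged into one kernel-verified Lean document; each statement's English description precedes it below -/
import Mathlib

section
/- The Vámos matroid V is not algebraic: there exist no field extension k ⊆ K and injective map σ from the ground set of V into K such that a subset I of the ground set is independent in V exactly when the family (σ(e))_{e ∈ I} is algebraically independent over k. -/
/-- The five circuit-hyperplanes of the Vámos matroid on the ground set `Fin 8`,
where `0,1,2,3,4,5,6,7` stand for `a,a',b,b',c,c',d,d'` respectively. -/
def vamosCH : Set (Finset (Fin 8)) :=
  {{0, 1, 2, 3}, {0, 1, 4, 5}, {2, 3, 4, 5}, {2, 3, 6, 7}, {4, 5, 6, 7}}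

/-- The independent sets of the Vámos matroid: all sets of size at most `3` together
with all `4`-element sets that are not circuit-hyperplanes. -/
def vamosIndep (I : Finset (Fin 8)) : Prop :=
  I.card ≤ 3 ∨ (I.card = 4 ∧ I ∉ vamosCH)

/-!
Let `q(c, u) = 0` be the irreducible equation of `u` over `k(S ∪ T)(c)`, scaled so that one of its
coefficients is `1`. It divides every equation of `u` over `k(S)(c)` and every one over `k(T)(c)`,
so its coefficients are algebraic over `k(S)` and over `k(T)`. Thus a point in the closures of both
`S ∪ {c}` and `T ∪ {c}` is in the closure of `c` together with `cl S ∩ cl T` (Dress–Lovász).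

Granted this, the coplanar lines `bb'` and `cc'` of a Vámos configuration meet in a point, and the
lines `aa'` and `dd'`, each coplanar with both, pass through it. Hence `aa'` and `dd'` are coplanar,
whereas `{a, a', d, d'}` is independent.
-/

open Polynomial nonZeroDivisors Set
open scoped Polynomial.Bivariate

section IntegralEquation

variable {R : Type*} [CommRing R] [IsDomain R] [NormalizedGCDMonoid R]

theorem exists_isPrimitive_associated_map (F : Type*) [Field F] [Algebra R F] [IsFractionRing R F]
    {f : F[X]} (hf : f ≠ 0) :
    ∃ q : R[X], q.IsPrimitive ∧ Associated (q.map (algebraMap R F)) f := by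
  let n := IsLocalization.integerNormalization R⁰ f
  obtain ⟨b, hb, hn : n.map _ = b • f⟩ := IsLocalization.integerNormalization_spec R⁰ f
  have isUnit_C_map {r : R} (hr : r ≠ 0) : IsUnit (C (algebraMap R F r)) :=
    isUnit_C.2 (by simpa using hr)
  have hcontent : n.content ≠ 0 := by
    rw [Ne, content_eq_zero_iff]
    exact fun h ↦ hf (IsFractionRing.integerNormalization_eq_zero_iff.1 h)
  refine ⟨n.primPart, n.isPrimitive_primPart, ?_⟩
  calc
    Associated (n.primPart.map (algebraMap R F))
        (C (algebraMap R F n.content) * n.primPart.map _) :=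
      associated_unit_mul_right _ _ (isUnit_C_map hcontent)
    _ = n.map (algebraMap R F) := by
      rw [← map_C, ← Polynomial.map_mul, ← n.eq_C_content_mul_primPart]
    _ = C (algebraMap R F b) * f := by rw [hn, ← algebraMap_smul F, C_mul']
    Associated _ f := associated_unit_mul_left _ _ (isUnit_C_map (nonZeroDivisors.ne_zero hb))

theorem exists_forall_aeval_eq_zero_iff_dvd {A : Type*} [Field A] [Algebra R A] [FaithfulSMul R A]
    {u : A} (hu : IsAlgebraic R u) : ∃ q : R[X], ∀ p : R[X], aeval u p = 0 ↔ q ∣ p := by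
  let F := FractionRing R
  let := FractionRing.liftAlgebra R A
  have hint : IsIntegral F u :=
    (hu.extendScalars (FaithfulSMul.algebraMap_injective R F)).isIntegral
  obtain ⟨q, hq, hqu⟩ := exists_isPrimitive_associated_map (R := R) F (minpoly.ne_zero hint)
  refine ⟨q, fun p ↦ ?_⟩
  rw [← aeval_map_algebraMap F, ← minpoly.dvd_iff, ← hqu.dvd_iff_dvd_left,
    hq.dvd_iff_fraction_map_dvd_fraction_map F]

end IntegralEquation

section Kronecker

theorem coeff_eval_X_pow {R : Type*} [CommSemiring R] {q : R[X][Y]} {m i : ℕ}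
    (hq : ∀ j, (q.coeff j).natDegree < m) (hi : i < m) (j : ℕ) :
    (q.eval (X ^ m)).coeff (m * j + i) = (q.coeff j).coeff i := by
  rw [eval_eq_sum_range' (Nat.lt_succ_of_le (le_max_left q.natDegree j)), finsetSum_coeff,
    Finset.sum_eq_single_of_mem j (by simp)]
  · rw [← pow_mul, add_comm, coeff_mul_X_pow]
  · intro l _ hl
    rw [← pow_mul, coeff_mul_X_pow']
    split_ifs with h
    · have hlj : l < j := hl.lt_of_le <| by
        by_contra! hjl
        have := Nat.mul_le_mul_left m hjl
        grind
      have := Nat.mul_le_mul_left m (show l + 1 ≤ j from hlj)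
      exact coeff_eq_zero_of_natDegree_lt ((hq l).trans_le (by grind))
    · rfl

theorem eventually_forall_natDegree_coeff_lt {R : Type*} [Semiring R] (q : R[X][Y]) :
    ∀ᶠ m in Filter.atTop, ∀ j, (q.coeff j).natDegree < m := by
  filter_upwards [Filter.eventually_gt_atTop (q.support.sup fun j ↦ (q.coeff j).natDegree)]
    with m hm j
  by_cases hj : j ∈ q.support
  · exact (Finset.le_sup (f := fun j ↦ (q.coeff j).natDegree) hj).trans_lt hm
  · rw [notMem_support_iff.1 hj, natDegree_zero]
    exact hm.pos

end Kronecker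

section Divisors

variable {E L : Type*} [Field E] [Field L] [Algebra E L]

theorem isAlgebraic_coeff_div_leadingCoeff_of_dvd_map {p : E[X]} {q : L[X]} (hp : p ≠ 0)
    (hqp : q ∣ p.map (algebraMap E L)) (i : ℕ) : IsAlgebraic E (q.coeff i / q.leadingCoeff) := by
  have hq : q ≠ 0 := ne_zero_of_dvd_ne_zero (Polynomial.map_ne_zero hp) hqp
  have hdvd : q * C q.leadingCoeff⁻¹ ∣ (p * C p.leadingCoeff⁻¹).map (algebraMap E L) := by
    rw [(isUnit_C.2 (by simpa using hq)).mul_right_dvd, Polynomial.map_mul]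
    exact hqp.mul_right _
  have h := isIntegral_coeff_of_dvd _ _ (monic_mul_leadingCoeff_inv hp)
    (monic_mul_leadingCoeff_inv hq) hdvd i
  rw [coeff_mul_C, ← div_eq_mul_inv] at h
  exact h.isAlgebraic

-- Kronecker's substitution `Y ↦ X ^ m` reduces the claim to polynomials in one variable.
theorem isAlgebraic_coeff_coeff_div_leadingCoeff_of_dvd_map {p : E[X][Y]} {q : L[X][Y]}
    (hp : p ≠ 0) (hqp : q ∣ p.map (mapRingHom (algebraMap E L))) (i j : ℕ) :
    IsAlgebraic E ((q.coeff i).coeff j / q.leadingCoeff.leadingCoeff) := by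
  obtain ⟨m, hpm, hqm, hjm⟩ := ((eventually_forall_natDegree_coeff_lt p).and
    ((eventually_forall_natDegree_coeff_lt q).and (Filter.eventually_gt_atTop j))).exists
  have hp_eval : p.eval (X ^ m) ≠ 0 := by
    intro h
    have hlc := coeff_eval_X_pow hpm (hpm p.natDegree) p.natDegree
    rw [h, coeff_zero] at hlc
    exact hp (leadingCoeff_eq_zero.1 (leadingCoeff_eq_zero.1 hlc.symm))
  have hdvd : q.eval (X ^ m) ∣ (p.eval (X ^ m)).map (algebraMap E L) := by
    have hmap : (p.map (mapRingHom (algebraMap E L))).eval (X ^ m) =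
        (p.eval (X ^ m)).map (algebraMap E L) := by
      simpa using eval_map_apply (mapRingHom (algebraMap E L)) (X ^ m : E[X]) (p := p)
    exact hmap ▸ eval_dvd hqp
  have hlc : (q.eval (X ^ m)).leadingCoeff ≠ 0 :=
    leadingCoeff_ne_zero.2 (ne_zero_of_dvd_ne_zero (Polynomial.map_ne_zero hp_eval) hdvd)
  have hcoeff (i : ℕ) {j : ℕ} (hj : j < m) :
      IsAlgebraic E ((q.coeff i).coeff j / (q.eval (X ^ m)).leadingCoeff) := by
    rw [← coeff_eval_X_pow hqm hj]
    exact isAlgebraic_coeff_div_leadingCoeff_of_dvd_map hp_eval hdvd _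
  have hratio := (hcoeff i hjm).mul (hcoeff q.natDegree (hqm q.natDegree)).inv
  rwa [← div_eq_mul_inv, div_div_div_cancel_right₀ hlc] at hratio

end Divisors

section BivariateEquation

theorem aevalAeval_eq_eval₂ {R A : Type*} [CommSemiring R] [CommSemiring A] [Algebra R A]
    (x y : A) (p : R[X][Y]) :
    aevalAeval x y p = p.eval₂ (aeval x : R[X] →ₐ[R] A).toRingHom y := by
  induction p using Polynomial.induction_on' with
  | add p q hp hq => rw [map_add, hp, hq, eval₂_add]
  | monomial n a => simp

theorem aevalAeval_map {R S A : Type*} [CommSemiring R] [CommSemiring S] [CommSemiring A]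
    [Algebra R S] [Algebra S A] [Algebra R A] [IsScalarTower R S A] (x y : A) (p : R[X][Y]) :
    aevalAeval x y (p.map (mapRingHom (algebraMap R S))) = aevalAeval x y p := by
  rw [aevalAeval_eq_eval₂, aevalAeval_eq_eval₂, eval₂_map]
  congr 1
  ext <;> simp [← IsScalarTower.algebraMap_apply]

theorem exists_ne_zero_aevalAeval_eq_zero {R A : Type*} [CommRing R] [CommRing A] [Algebra R A]
    {c u : A} (hu : IsAlgebraic (Algebra.adjoin R {c}) u) :
    ∃ p : R[X][Y], p ≠ 0 ∧ aevalAeval c u p = 0 := by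
  obtain ⟨p', hp', hp'u⟩ := hu
  let f : R[X] →ₐ[R] Algebra.adjoin R {c} := aeval ⟨c, Algebra.self_mem_adjoin_singleton R c⟩
  have hf : Function.Surjective f := by
    rintro ⟨x, hx⟩
    obtain ⟨r, rfl⟩ := Algebra.adjoin_singleton_eq_range_aeval R c ▸ hx
    exact ⟨r, Subtype.ext (aeval_subalgebra_coe ..)⟩
  obtain ⟨p, rfl⟩ := map_surjective f.toRingHom hf p'
  refine ⟨p, by rintro rfl; simp at hp', ?_⟩
  rw [← hp'u, aevalAeval_eq_eval₂, aeval_def, eval₂_map]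
  congr 1
  ext <;> simp [f]

theorem isAlgebraic_of_forall_coeff_mem {R A : Type*} [CommRing R] [CommRing A] [Algebra R A]
    (S : Subalgebra R A) {u : A} {p : A[X]} (hp : p ≠ 0) (hS : ∀ i, p.coeff i ∈ S)
    (hu : p.eval u = 0) : IsAlgebraic S u := by
  obtain ⟨r, rfl⟩ := (lifts_iff_coeff_lifts (f := algebraMap S A) p).2 fun i ↦ ⟨⟨_, hS i⟩, rfl⟩
  exact ⟨r, by rintro rfl; simp at hp, by simpa using hu⟩

variable {L K : Type*} [Field L] [Field K] [Algebra L K] {c u : K}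

theorem exists_forall_aevalAeval_eq_zero_iff_dvd (hc : Transcendental L c)
    (hu : IsAlgebraic (Algebra.adjoin L {c}) u) :
    ∃ q : L[X][Y], q.leadingCoeff.leadingCoeff = 1 ∧ ∀ p, aevalAeval c u p = 0 ↔ q ∣ p := by
  let := (aeval c : L[X] →ₐ[L] K).toRingHom.toAlgebra
  have : FaithfulSMul L[X] K :=
    (faithfulSMul_iff_algebraMap_injective _ _).2 (transcendental_iff_injective.1 hc)
  have aeval_eq (p : L[X][Y]) : aeval u p = aevalAeval c u p := (aevalAeval_eq_eval₂ c u p).symm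
  obtain ⟨p, hp0, hp⟩ := exists_ne_zero_aevalAeval_eq_zero hu
  let := Classical.choice (inferInstance : Nonempty (NormalizedGCDMonoid L[X]))
  obtain ⟨q, hq⟩ := exists_forall_aeval_eq_zero_iff_dvd ⟨p, hp0, (aeval_eq p).trans hp⟩
  simp only [aeval_eq] at hq
  have hlc : q.leadingCoeff.leadingCoeff ≠ 0 := by
    simpa using ne_zero_of_dvd_ne_zero hp0 ((hq p).1 hp)
  have hunit : IsUnit (C (C q.leadingCoeff.leadingCoeff⁻¹)) :=
    isUnit_C.2 (isUnit_C.2 (inv_ne_zero hlc).isUnit)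
  exact ⟨C (C q.leadingCoeff.leadingCoeff⁻¹) * q, by simp [leadingCoeff_mul, hlc],
    fun p ↦ by rw [hq, hunit.mul_left_dvd]⟩

theorem isAlgebraic_coeff_coeff_of_forall_dvd {E : Type*} [Field E] [Algebra E L] [Algebra E K]
    [IsScalarTower E L K] {q : L[X][Y]} (hlc : q.leadingCoeff.leadingCoeff = 1)
    (hq : ∀ p, aevalAeval c u p = 0 → q ∣ p) (hu : IsAlgebraic (Algebra.adjoin E {c}) u)
    (i j : ℕ) : IsAlgebraic E (algebraMap L K ((q.coeff i).coeff j)) := by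
  obtain ⟨p, hp0, hp⟩ := exists_ne_zero_aevalAeval_eq_zero hu
  have h := isAlgebraic_coeff_coeff_div_leadingCoeff_of_dvd_map hp0
    (hq _ ((aevalAeval_map c u p).trans hp)) i j
  rw [hlc, div_one] at h
  exact h.algebraMap

end BivariateEquation

/-- The one-point form of Björner–Lovász pseudomodularity: if `c` is not spanned by `S ∪ T`, then
adding `c` to `S` and to `T` adds nothing to `cl S ∩ cl T` beyond the closure with `c`. -/
def IsPseudomodular {α : Type*} (M : Matroid α) : Prop :=
  ∀ ⦃S T : Set α⦄ ⦃c : α⦄, c ∉ M.closure (S ∪ T) →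
    M.closure (insert c S) ∩ M.closure (insert c T) ⊆
      M.closure (insert c (M.closure S ∩ M.closure T))

section AlgebraicMatroid

variable {k K : Type*} [Field k] [Field K] [Algebra k K] {S T : Set K} {c u : K}

theorem mem_matroid_closure_iff_isAlgebraic :
    u ∈ (AlgebraicIndependent.matroid k K).closure S ↔ IsAlgebraic (Algebra.adjoin k S) u := by
  rw [AlgebraicIndependent.matroid_closure_eq, SetLike.mem_coe, Subalgebra.mem_algebraicClosure]

open IntermediateField.algebraAdjoinAdjoin in
theorem mem_matroid_closure_iff_isAlgebraic_adjoin :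
    u ∈ (AlgebraicIndependent.matroid k K).closure S ↔
      IsAlgebraic (IntermediateField.adjoin k S) u := by
  rw [mem_matroid_closure_iff_isAlgebraic]
  exact IsFractionRing.isAlgebraic_iff _ _ _

theorem isAlgebraic_adjoin_singleton_of_mem_closure_insert {L : IntermediateField k K}
    (hS : S ⊆ L) (hu : u ∈ (AlgebraicIndependent.matroid k K).closure (insert c S)) :
    IsAlgebraic (Algebra.adjoin L {c}) u := by
  rw [mem_matroid_closure_iff_isAlgebraic] at hu
  have hle : Algebra.adjoin k (insert c S) ≤ (Algebra.adjoin L {c}).restrictScalars k :=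
    Algebra.adjoin_le <| insert_subset (Algebra.self_mem_adjoin_singleton _ c) fun x hx ↦
      (Algebra.adjoin L {c}).algebraMap_mem ⟨x, hS hx⟩
  exact hu.ringHom_of_comp_eq (Subalgebra.inclusion hle) (RingHom.id K)
    (Subalgebra.inclusion_injective hle) rfl

theorem coeff_coeff_mem_matroid_closure {L : IntermediateField k K} (hS : S ⊆ L) {q : L[X][Y]}
    (hlc : q.leadingCoeff.leadingCoeff = 1) (hq : ∀ p, aevalAeval c u p = 0 → q ∣ p)
    (hu : u ∈ (AlgebraicIndependent.matroid k K).closure (insert c S)) (i j : ℕ) :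
    ((q.coeff i).coeff j : K) ∈ (AlgebraicIndependent.matroid k K).closure S := by
  let E := IntermediateField.adjoin k S
  let := (IntermediateField.inclusion (IntermediateField.adjoin_le_iff.2 hS : E ≤ L)).toAlgebra
  have : IsScalarTower E L K := .of_algebraMap_eq fun _ ↦ rfl
  rw [mem_matroid_closure_iff_isAlgebraic_adjoin]
  exact isAlgebraic_coeff_coeff_of_forall_dvd hlc hq
    (isAlgebraic_adjoin_singleton_of_mem_closure_insert (IntermediateField.subset_adjoin k S) hu)
    i j

theorem isPseudomodular_algebraicIndependent_matroid :
    IsPseudomodular (AlgebraicIndependent.matroid k K) := by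
  intro S T c hc u ⟨huS, huT⟩
  let L := IntermediateField.adjoin k (S ∪ T)
  have hST : S ∪ T ⊆ L := IntermediateField.subset_adjoin k _
  have hS : S ⊆ L := subset_union_left.trans hST
  have hT : T ⊆ L := subset_union_right.trans hST
  replace hc : Transcendental L c := mem_matroid_closure_iff_isAlgebraic_adjoin.not.1 hc
  obtain ⟨q, hlc, hq⟩ := exists_forall_aevalAeval_eq_zero_iff_dvd hc
    (isAlgebraic_adjoin_singleton_of_mem_closure_insert hS huS)
  have hcoeff (i j : ℕ) := mem_inter
    (coeff_coeff_mem_matroid_closure hS hlc (fun p ↦ (hq p).1) huS i j)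
    (coeff_coeff_mem_matroid_closure hT hlc (fun p ↦ (hq p).1) huT i j)
  have hq0 : q ≠ 0 := by rintro rfl; simp at hlc
  rw [mem_matroid_closure_iff_isAlgebraic]
  refine isAlgebraic_of_forall_coeff_mem _ (p := q.map (aeval c).toRingHom) ?_ (fun i ↦ ?_) ?_
  · exact (Polynomial.map_ne_zero_iff (transcendental_iff_injective.1 hc)).2 hq0
  · rw [coeff_map, AlgHom.toRingHom_eq_coe, RingHom.coe_coe, aeval_eq_sum_range]
    simp only [Algebra.smul_def]
    exact sum_mem fun j _ ↦ mul_mem (Algebra.subset_adjoin (.inr (hcoeff i j)))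
      (pow_mem (Algebra.subset_adjoin (.inl rfl)) j)
  · rw [eval_map, ← aevalAeval_eq_eval₂, hq]

end AlgebraicMatroid

section Pseudomodular

variable {α : Type*} {M : Matroid α}

theorem subset_closure_singleton_of_eRk_le_one {Z : Set α} {p : α} (hZ : Z ⊆ M.E)
    (hZr : M.eRk Z ≤ 1) (hpZ : p ∈ Z) (hp : p ∉ M.closure ∅) : Z ⊆ M.closure {p} := by
  intro q hq
  by_contra hqp
  have hp1 : M.eRk {p} = 1 := by
    rw [← insert_empty_eq, Matroid.eRk_insert_eq_add_one ⟨hZ hpZ, hp⟩, Matroid.eRk_empty, zero_add]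
  have hqp2 : M.eRk {q, p} = 2 := by
    rw [Matroid.eRk_insert_eq_add_one ⟨hZ hq, hqp⟩, hp1, one_add_one_eq_two]
  have hqp1 : M.eRk {q, p} ≤ 1 := (M.eRk_mono (pair_subset hq hpZ)).trans hZr
  exact absurd (hqp2 ▸ hqp1) (by decide)

theorem eRk_inter_closure_le_one {S T : Set α} (hS : M.eRk S ≤ 2) (hT : M.eRk T ≤ 2)
    (hST : 3 ≤ M.eRk (S ∪ T)) : M.eRk (M.closure S ∩ M.closure T) ≤ 1 := by
  have hunion : M.eRk (M.closure S ∪ M.closure T) = M.eRk (S ∪ T) := by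
    rw [← M.eRk_closure_eq, Matroid.closure_union_closure_left_eq,
      Matroid.closure_union_closure_right_eq, M.eRk_closure_eq]
  refine (ENat.add_le_add_iff_right (k := 3) (by simp)).1 ?_
  calc
    M.eRk (M.closure S ∩ M.closure T) + 3
      ≤ M.eRk (M.closure S ∩ M.closure T) + M.eRk (M.closure S ∪ M.closure T) := by
        rw [hunion]; gcongr
    _ ≤ M.eRk (M.closure S) + M.eRk (M.closure T) := M.eRk_inter_add_eRk_union_le _ _
    _ ≤ 2 + 2 := by rw [M.eRk_closure_eq, M.eRk_closure_eq]; gcongr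
    _ = 1 + 3 := by norm_num

namespace IsPseudomodular

variable {S T : Set α} {c u : α}

theorem exists_mem_inter_closure (hM : IsPseudomodular M) (hc : c ∉ M.closure (S ∪ T))
    (huS : u ∈ M.closure (insert c S)) (huT : u ∈ M.closure (insert c T))
    (hu : u ∉ M.closure {c}) : ∃ p ∈ M.closure S ∩ M.closure T, p ∉ M.closure ∅ := by
  by_contra! h
  have := M.closure_subset_closure (insert_subset_insert h) (hM hc ⟨huS, huT⟩)
  rw [Matroid.closure_insert_closure_eq_closure_insert, insert_empty_eq] at this
  exact hu this

theorem mem_closure_pair (hM : IsPseudomodular M) (hc : c ∉ M.closure (S ∪ T))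
    (huS : u ∈ M.closure (insert c S)) (huT : u ∈ M.closure (insert c T))
    (hu : u ∉ M.closure {c}) {p : α} (hp : M.closure S ∩ M.closure T ⊆ M.closure {p}) :
    p ∈ M.closure {c, u} := by
  have hup := M.closure_subset_closure (insert_subset_insert hp) (hM hc ⟨huS, huT⟩)
  rw [Matroid.closure_insert_closure_eq_closure_insert, pair_comm] at hup
  exact pair_comm u c ▸ Matroid.mem_closure_insert hu hup

theorem closure_pair_inter_closure_pair_not_subset (hM : IsPseudomodular M) {d v : α}
    (hST : M.eRk (M.closure S ∩ M.closure T) ≤ 1)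
    (hc : c ∉ M.closure (S ∪ T)) (huS : u ∈ M.closure (insert c S))
    (huT : u ∈ M.closure (insert c T)) (hu : u ∉ M.closure {c})
    (hd : d ∉ M.closure (S ∪ T)) (hvS : v ∈ M.closure (insert d S))
    (hvT : v ∈ M.closure (insert d T)) (hv : v ∉ M.closure {d}) :
    ¬ M.closure {c, u} ∩ M.closure {d, v} ⊆ M.closure ∅ := by
  obtain ⟨p, hpST, hp⟩ := hM.exists_mem_inter_closure hc huS huT hu
  have hpoint : M.closure S ∩ M.closure T ⊆ M.closure {p} :=
    subset_closure_singleton_of_eRk_le_one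
      (inter_subset_left.trans (M.closure_subset_ground S)) hST hpST hp
  exact fun h ↦ hp <| h ⟨hM.mem_closure_pair hc huS huT hu hpoint,
    hM.mem_closure_pair hd hvS hvT hv hpoint⟩

end IsPseudomodular

end Pseudomodular

section Vamos

variable {α ι : Type*} {M : Matroid α}

theorem mem_closure_image_iff_not_indep_image_insert {σ : ι → α} (hσ : Function.Injective σ)
    {I : Set ι} {x : ι} (hI : M.Indep (σ '' I)) (hx : x ∉ I) (hxE : σ x ∈ M.E) :
    σ x ∈ M.closure (σ '' I) ↔ ¬ M.Indep (σ '' insert x I) := by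
  rw [hI.mem_closure_iff_of_notMem (by rwa [hσ.mem_set_image]), image_insert_eq,
    Matroid.not_indep_iff (insert_subset hxE hI.subset_ground)]

instance : DecidablePred (· ∈ vamosCH) := fun I ↦
  decidable_of_iff (I ∈ ({{0, 1, 2, 3}, {0, 1, 4, 5}, {2, 3, 4, 5}, {2, 3, 6, 7}, {4, 5, 6, 7}} :
    Finset (Finset (Fin 8)))) (by simp [vamosCH])

instance : DecidablePred vamosIndep := fun _ ↦ inferInstanceAs (Decidable (_ ∨ _))

variable {σ : Fin 8 → α}

theorem mem_closure_image_iff_not_vamosIndep_insert (hσ : Function.Injective σ)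
    (h : ∀ I : Finset (Fin 8), vamosIndep I ↔ M.Indep (σ '' I)) {I : Finset (Fin 8)} {x : Fin 8}
    (hI : vamosIndep I) (hx : x ∉ I) :
    σ x ∈ M.closure (σ '' I) ↔ ¬ vamosIndep (insert x I) := by
  have hxE : σ x ∈ M.E := ((h {x}).1 (by simp [vamosIndep])).subset_ground <|
    mem_image_of_mem σ (Finset.mem_singleton_self x)
  rw [h, Finset.coe_insert, mem_closure_image_iff_not_indep_image_insert hσ ((h I).1 hI) hx hxE]

theorem not_isPseudomodular_of_vamosIndep_iff_indep_image (hσ : Function.Injective σ)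
    (h : ∀ I : Finset (Fin 8), vamosIndep I ↔ M.Indep (σ '' I)) : ¬ IsPseudomodular M := by
  intro hM
  have mem_closure {I : Finset (Fin 8)} {x : Fin 8} (hI : vamosIndep I ∧ x ∉ I) :=
    mem_closure_image_iff_not_vamosIndep_insert hσ h hI.1 hI.2
  have hplane : M.closure ({σ 2, σ 3} ∪ {σ 4, σ 5}) =
      M.closure (σ '' ({2, 3, 4} : Finset (Fin 8))) := by
    have h5 := (mem_closure (I := {2, 3, 4}) (x := 5) (by decide)).2 (by decide)
    rw [← Matroid.closure_insert_eq_of_mem_closure h5]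
    congr 1
    simp only [Finset.coe_insert, Finset.coe_singleton, image_insert_eq, image_singleton]
    grind
  have hpoint : M.eRk (M.closure {σ 2, σ 3} ∩ M.closure {σ 4, σ 5}) ≤ 1 := by
    have eRk_pair_le {x y : Fin 8} (hxy : x ≠ y) : M.eRk {σ x, σ y} ≤ 2 :=
      (M.eRk_le_encard _).trans (encard_pair (hσ.ne hxy)).le
    refine eRk_inter_closure_le_one (eRk_pair_le (by decide)) (eRk_pair_le (by decide)) ?_
    rw [← M.eRk_closure_eq, hplane, M.eRk_closure_eq, ((h _).1 (by decide)).eRk_eq_encard,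
      hσ.encard_image, encard_coe_eq_coe_finsetCard]
    rfl
  have hskew : M.closure {σ 0, σ 1} ∩ M.closure {σ 6, σ 7} ⊆ M.closure ∅ := by
    have hI : M.Indep ({σ 0, σ 1} ∪ {σ 6, σ 7}) := by
      simpa [image_insert_eq] using (h {6, 7, 0, 1}).1 (by decide)
    rw [← hI.closure_inter_eq_inter_closure,
      disjoint_iff_inter_eq_empty.1 (by simp [hσ.eq_iff])]
  refine hM.closure_pair_inter_closure_pair_not_subset hpoint ?_ ?_ ?_ ?_ ?_ ?_ ?_ ?_ hskew
  · rw [hplane, mem_closure (by decide)]; decide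
  · simpa [image_insert_eq] using (mem_closure (I := {0, 2, 3}) (x := 1) (by decide)).2 (by decide)
  · simpa [image_insert_eq] using (mem_closure (I := {0, 4, 5}) (x := 1) (by decide)).2 (by decide)
  · simpa using (mem_closure (I := {0}) (x := 1) (by decide)).not.2 (by decide)
  · rw [hplane, mem_closure (by decide)]; decide
  · simpa [image_insert_eq] using (mem_closure (I := {6, 2, 3}) (x := 7) (by decide)).2 (by decide)
  · simpa [image_insert_eq] using (mem_closure (I := {6, 4, 5}) (x := 7) (by decide)).2 (by decide)
  · simpa using (mem_closure (I := {6}) (x := 7) (by decide)).not.2 (by decide)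

end Vamos

/-- **Ingleton–Main 1975.**  The Vámos matroid is not algebraic. -/
theorem vamos_not_algebraic :
    ∀ (k K : Type*) [Field k] [Field K] [Algebra k K] (σ : Fin 8 → K),
      Function.Injective σ →
      ¬ (∀ I : Finset (Fin 8),
          vamosIndep I ↔ AlgebraicIndependent k (fun e : {x // x ∈ I} => σ e.1)) := by
  intro k K _ _ _ σ hσ h
  refine not_isPseudomodular_of_vamosIndep_iff_indep_image hσ (fun I ↦ ?_)
    (isPseudomodular_algebraicIndependent_matroid (k := k))
  rw [h I, AlgebraicIndependent.matroid_indep_iff]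
  exact algebraicIndependent_image hσ.injOn (s := (I : Set (Fin 8)))
end

section
/- For every integer k ≥ 3, the matroid M_k is not algebraic: there exist no field extension k' ⊆ K and injective map σ : E → K such that a set I ⊆ E is independent in M_k exactly when the family (σ(e))_{e ∈ I} is algebraically independent over k'. -/
/-- The family `H_k` of circuit-hyperplanes of `M_k` on `E = (Fin 3) × (Fin k)`, where
`(0, i), (1, i), (2, i)` stand for `a_{i+1}, b_{i+1}, c_{i+1}`. -/
def Hfam (k : ℕ) : Set (Finset (Fin 3 × Fin k)) :=
  {H | ∃ i j : Fin k, i < j ∧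
    (H = {(0, i), (0, j), (1, i), (1, j)} ∨
     (H = {(0, i), (0, j), (2, i), (2, j)} ∧ ¬((i : ℕ) = 0 ∧ (j : ℕ) = k - 1)) ∨
     H = {(1, i), (1, j), (2, i), (2, j)})}

/-- The independent sets of `M_k`: all sets of size at most `3` together with all
`4`-element sets not in `H_k`. -/
def MkIndep (k : ℕ) (I : Finset (Fin 3 × Fin k)) : Prop :=
  I.card ≤ 3 ∨ (I.card = 4 ∧ I ∉ Hfam k)

/-!
Algebraic matroids have the Ingleton–Main property: if `x` is independent of `S ∪ T` and `y` lies
in both `cl (S ∪ {x})` and `cl (T ∪ {x})`, then `y` lies in the closure of `cl S ∩ cl T` and `x`.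
Indeed, let `L₁`, `L₂`, `D` be the fields `cl S`, `cl T`, `cl (S ∪ T)`. As `Lᵢ` is relatively
algebraically closed in `D`, so is `Lᵢ(x)` in `D(x)`. Hence the minimal polynomial of `y` over
`D(x)` has its coefficients in `L₁(x) ∩ L₂(x)`, which is `(L₁ ∩ L₂)(x)` because a rational function
has unique lowest terms.

It follows that two coplanar lines `ab` and `cd`, both coplanar with a line `xy` outside their
plane, meet in a point of `xy`. In `M_k` the lines `aᵢbᵢ` thus concur in a point `p`, and the lines
`bᵢcᵢ` in a point `q`. The lines `a₁c₁` and `aₖcₖ` both meet `a₂c₂` on `pq`, so they share a point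
and are coplanar, although `{a₁, aₖ, c₁, cₖ}` is not in `H_k`.
-/

open Polynomial
open scoped RatFunc

section RationalFunctions

attribute [local instance] Polynomial.algebra

theorem isIntegrallyClosedIn_of_isFractionRing {R S : Type*} (A B : Type*) [CommRing R] [IsDomain R]
    [CommRing S] [Field A] [Field B] [Algebra R S] [Algebra R A] [IsFractionRing R A]
    [Algebra S B] [IsFractionRing S B] [Algebra R B] [Algebra A B] [IsScalarTower R A B]
    [IsScalarTower R S B] [IsIntegrallyClosed S] [IsIntegrallyClosedIn R S] :
    IsIntegrallyClosedIn A B := by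
  refine isIntegrallyClosedIn_iff.mpr ⟨(algebraMap A B).injective, fun {f} hf => ?_⟩
  have hf' : IsAlgebraic R f := (IsFractionRing.isAlgebraic_iff R A B).mpr hf.isAlgebraic
  obtain ⟨a, ha, hint⟩ := hf'.exists_integral_multiple
  obtain ⟨s, hs⟩ := IsIntegrallyClosed.isIntegral_iff.mp (hint.tower_top (A := S))
  have hsR : IsIntegral R s := by
    refine (isIntegral_algHom_iff (IsScalarTower.toAlgHom R S B)
      (IsFractionRing.injective S B)).mp ?_
    simpa [hs] using hint
  obtain ⟨r, rfl⟩ := (isIntegrallyClosedIn_iff.mp ‹IsIntegrallyClosedIn R S›).2 hsR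
  have haA : algebraMap R A a ≠ 0 := by simpa using ha
  refine ⟨algebraMap R A r / algebraMap R A a, ?_⟩
  have haB : algebraMap R B a ≠ 0 := by
    rw [IsScalarTower.algebraMap_apply R A B]; simpa using haA
  rw [map_div₀, ← IsScalarTower.algebraMap_apply, ← IsScalarTower.algebraMap_apply,
    IsScalarTower.algebraMap_apply R S B, hs, Algebra.smul_def, mul_div_cancel_left₀ _ haB]

theorem isIntegrallyClosedIn_polynomial {R S : Type*} [CommRing R] [CommRing S] [Algebra R S]
    [IsIntegrallyClosedIn R S] : IsIntegrallyClosedIn R[X] S[X] := by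
  have ⟨hinj, hclosed⟩ := isIntegrallyClosedIn_iff.mp ‹IsIntegrallyClosedIn R S›
  exact isIntegrallyClosedIn_iff.mpr ⟨map_injective _ hinj,
    fun hp => (lifts_iff_coeff_lifts _).mpr fun n => hclosed (hp.coeff n)⟩

theorem isIntegrallyClosedIn_ratFunc {L D : Type*} [Field L] [Field D] [Algebra L D]
    [IsIntegrallyClosedIn L D] : IsIntegrallyClosedIn L⟮X⟯ D⟮X⟯ :=
  have := isIntegrallyClosedIn_polynomial (R := L) (S := D)
  isIntegrallyClosedIn_of_isFractionRing (R := L[X]) (S := D[X]) _ _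

theorem minpoly_eq_map_of_isIntegrallyClosedIn {F E A : Type*} [Field F] [Field E] [Ring A]
    [IsDomain A] [Algebra F E] [Algebra F A] [Algebra E A] [IsScalarTower F E A]
    [IsIntegrallyClosedIn F E] {y : A} (hy : IsIntegral F y) :
    minpoly E y = (minpoly F y).map (algebraMap F E) := by
  have hE : IsIntegral E y := hy.tower_top
  have hdvd := minpoly.dvd_map_of_isScalarTower F E y
  have hlifts : minpoly E y ∈ lifts (algebraMap F E) := (lifts_iff_coeff_lifts _).mpr fun n =>
    (isIntegrallyClosedIn_iff.mp ‹IsIntegrallyClosedIn F E›).2 <|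
      isIntegral_coeff_of_dvd _ _ (minpoly.monic hy) (minpoly.monic hE) hdvd n
  obtain ⟨q, hq⟩ := hlifts
  simp only [coe_mapRingHom] at hq
  have hqy : aeval y q = 0 := by rw [← aeval_map_algebraMap E, hq, minpoly.aeval]
  exact eq_of_monic_of_associated (minpoly.monic hE) ((minpoly.monic hy).map _) <|
    associated_of_dvd_dvd hdvd (hq ▸ Polynomial.map_dvd _ (minpoly.dvd F y hqy))

theorem isAlgebraic_of_range_inf_le {F₀ F₁ F₂ E A : Type*} [Field F₀] [Field F₁] [Field F₂]
    [Field E] [Ring A] [IsDomain A] [Algebra F₀ E] [Algebra F₁ E] [Algebra F₂ E] [Algebra E A]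
    [Algebra F₀ A] [IsScalarTower F₀ E A] [Algebra F₁ A] [IsScalarTower F₁ E A]
    [Algebra F₂ A] [IsScalarTower F₂ E A]
    [IsIntegrallyClosedIn F₁ E] [IsIntegrallyClosedIn F₂ E]
    (hrange : (algebraMap F₁ E).range ⊓ (algebraMap F₂ E).range ≤ (algebraMap F₀ E).range) {y : A}
    (h₁ : IsAlgebraic F₁ y) (h₂ : IsAlgebraic F₂ y) : IsAlgebraic F₀ y := by
  have hlifts : minpoly E y ∈ lifts (algebraMap F₀ E) := by
    refine (lifts_iff_coeff_lifts _).mpr fun n => hrange ⟨?_, ?_⟩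
    · rw [minpoly_eq_map_of_isIntegrallyClosedIn h₁.isIntegral, coeff_map]
      exact ⟨_, rfl⟩
    · rw [minpoly_eq_map_of_isIntegrallyClosedIn h₂.isIntegral, coeff_map]
      exact ⟨_, rfl⟩
  obtain ⟨P, hP⟩ := hlifts
  rw [coe_mapRingHom] at hP
  refine ⟨P, ?_, by rw [← aeval_map_algebraMap E, hP, minpoly.aeval]⟩
  rintro rfl
  exact minpoly.ne_zero (h₁.isIntegral.tower_top (A := E)) (by rw [← hP, Polynomial.map_zero])

theorem ratFunc_num_denom_of_eq_div {K : Type*} [Field K] {g : K⟮X⟯} {p q : K[X]}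
    (hq : q.Monic) (hpq : IsCoprime p q)
    (hg : g = algebraMap K[X] K⟮X⟯ p / algebraMap K[X] K⟮X⟯ q) :
    g.num = p ∧ g.denom = q := by
  have hcross : g.num * q = p * g.denom := (RatFunc.num_mul_eq_mul_denom_iff hq.ne_zero).mpr hg
  have hdenom : g.denom = q := eq_of_monic_of_associated g.monic_denom hq <|
    associated_of_dvd_dvd (hg ▸ RatFunc.denom_div_dvd p q)
      (hpq.symm.dvd_of_dvd_mul_left (Dvd.intro_left _ hcross))
  exact ⟨mul_right_cancel₀ hq.ne_zero (hdenom ▸ hcross), hdenom⟩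

section BaseChange
variable {L D : Type*} [Field L] [Field D] [Algebra L D]

theorem ratFunc_algebraMap_algebraMap (p : L[X]) :
    algebraMap L⟮X⟯ D⟮X⟯ (algebraMap L[X] L⟮X⟯ p) =
      algebraMap D[X] D⟮X⟯ (p.map (algebraMap L D)) := by
  rw [← IsScalarTower.algebraMap_apply, IsScalarTower.algebraMap_apply L[X] D[X] D⟮X⟯,
    algebraMap_def, coe_mapRingHom]

theorem ratFunc_num_denom_algebraMap (g : L⟮X⟯) :
    (algebraMap L⟮X⟯ D⟮X⟯ g).num = g.num.map (algebraMap L D) ∧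
    (algebraMap L⟮X⟯ D⟮X⟯ g).denom = g.denom.map (algebraMap L D) := by
  refine ratFunc_num_denom_of_eq_div (g.monic_denom.map _)
    (g.isCoprime_num_denom.map (mapRingHom (algebraMap L D))) ?_
  rw [← ratFunc_algebraMap_algebraMap, ← ratFunc_algebraMap_algebraMap, ← map_div₀,
    g.num_div_denom]

theorem mem_range_algebraMap_ratFunc_iff {g : D⟮X⟯} :
    g ∈ (algebraMap L⟮X⟯ D⟮X⟯).range ↔
      g.num ∈ lifts (algebraMap L D) ∧ g.denom ∈ lifts (algebraMap L D) := by
  constructor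
  · rintro ⟨g, rfl⟩
    obtain ⟨hnum, hdenom⟩ := ratFunc_num_denom_algebraMap (D := D) g
    exact ⟨⟨g.num, hnum.symm⟩, ⟨g.denom, hdenom.symm⟩⟩
  · rintro ⟨⟨p, hp⟩, q, hq⟩
    rw [coe_mapRingHom] at hp hq
    refine ⟨algebraMap L[X] L⟮X⟯ p / algebraMap L[X] L⟮X⟯ q, ?_⟩
    rw [map_div₀, ratFunc_algebraMap_algebraMap, ratFunc_algebraMap_algebraMap, hp, hq,
      g.num_div_denom]

end BaseChange

theorem ratFunc_range_inf_le {L₀ L₁ L₂ D : Type*} [Field L₀] [Field L₁] [Field L₂]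
    [Field D] [Algebra L₀ D] [Algebra L₁ D] [Algebra L₂ D]
    (h : (algebraMap L₁ D).range ⊓ (algebraMap L₂ D).range ≤ (algebraMap L₀ D).range) :
    (algebraMap L₁⟮X⟯ D⟮X⟯).range ⊓ (algebraMap L₂⟮X⟯ D⟮X⟯).range ≤
      (algebraMap L₀⟮X⟯ D⟮X⟯).range := by
  rintro g ⟨hg₁, hg₂⟩
  simp only [SetLike.mem_coe, mem_range_algebraMap_ratFunc_iff, lifts_iff_coeff_lifts] at hg₁ hg₂ ⊢
  exact ⟨fun n => h ⟨hg₁.1 n, hg₂.1 n⟩, fun n => h ⟨hg₁.2 n, hg₂.2 n⟩⟩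

section Evaluation
variable {F D K : Type*} [Field F] [Field D] [Field K] [Algebra F D] [Algebra F K] [Algebra D K]
  [IsScalarTower F D K] {x : K}

/-- Evaluation of rational functions at a transcendental element `x`. -/
noncomputable def ratFuncEval (hx : Transcendental F x) : F⟮X⟯ →ₐ[F] K :=
  (IntermediateField.val _).comp (RatFunc.algEquivOfTranscendental x hx).toAlgHom

theorem ratFuncEval_algebraMap (hx : Transcendental F x) (p : F[X]) :
    ratFuncEval hx (algebraMap F[X] F⟮X⟯ p) = aeval x p := by
  simp [ratFuncEval]

theorem ratFuncEval_comp_algebraMap (hF : Transcendental F x) (hD : Transcendental D x) :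
    (ratFuncEval hD : D⟮X⟯ →+* K).comp (algebraMap F⟮X⟯ D⟮X⟯) = ratFuncEval hF := by
  refine IsFractionRing.ringHom_ext (A := F[X]) fun p => ?_
  simp only [RingHom.comp_apply, ratFunc_algebraMap_algebraMap, RingHom.coe_coe,
    ratFuncEval_algebraMap, aeval_map_algebraMap]

open IntermediateField.algebraAdjoinAdjoin in
theorem isAlgebraic_ratFunc_iff_isAlgebraic_adjoin (hx : Transcendental F x) {y : K} :
    (letI := (ratFuncEval hx).toAlgebra; IsAlgebraic F⟮X⟯ y) ↔
      IsAlgebraic (Algebra.adjoin F {x}) y := by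
  let _ := (ratFuncEval hx).toAlgebra
  rw [IsFractionRing.isAlgebraic_iff (Algebra.adjoin F {x}) (IntermediateField.adjoin F {x}) K]
  exact (isAlgebraic_ringHom_iff_of_comp_eq (RatFunc.algEquivOfTranscendental x hx)
    (RingHom.id K) Function.injective_id rfl).symm

end Evaluation

theorem isAlgebraic_adjoin_of_range_inf_le {L₀ L₁ L₂ D K : Type*} [Field L₀] [Field L₁] [Field L₂]
    [Field D] [Field K] [Algebra L₀ D] [Algebra L₁ D] [Algebra L₂ D] [Algebra D K]
    [Algebra L₀ K] [IsScalarTower L₀ D K] [Algebra L₁ K] [IsScalarTower L₁ D K]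
    [Algebra L₂ K] [IsScalarTower L₂ D K]
    [IsIntegrallyClosedIn L₁ D] [IsIntegrallyClosedIn L₂ D]
    (hrange : (algebraMap L₁ D).range ⊓ (algebraMap L₂ D).range ≤ (algebraMap L₀ D).range)
    {x y : K} (hx : Transcendental D x) (h₁ : IsAlgebraic (Algebra.adjoin L₁ {x}) y)
    (h₂ : IsAlgebraic (Algebra.adjoin L₂ {x}) y) : IsAlgebraic (Algebra.adjoin L₀ {x}) y := by
  have hx₀ : Transcendental L₀ x := hx.restrictScalars (algebraMap L₀ D).injective
  have hx₁ : Transcendental L₁ x := hx.restrictScalars (algebraMap L₁ D).injective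
  have hx₂ : Transcendental L₂ x := hx.restrictScalars (algebraMap L₂ D).injective
  let _ := (ratFuncEval hx).toAlgebra
  let _ := (ratFuncEval hx₀).toAlgebra
  let _ := (ratFuncEval hx₁).toAlgebra
  let _ := (ratFuncEval hx₂).toAlgebra
  have := IsScalarTower.of_algebraMap_eq' (ratFuncEval_comp_algebraMap hx₀ hx).symm
  have := IsScalarTower.of_algebraMap_eq' (ratFuncEval_comp_algebraMap hx₁ hx).symm
  have := IsScalarTower.of_algebraMap_eq' (ratFuncEval_comp_algebraMap hx₂ hx).symm
  have := isIntegrallyClosedIn_ratFunc (L := L₁) (D := D)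
  have := isIntegrallyClosedIn_ratFunc (L := L₂) (D := D)
  rw [← isAlgebraic_ratFunc_iff_isAlgebraic_adjoin hx₀]
  rw [← isAlgebraic_ratFunc_iff_isAlgebraic_adjoin hx₁] at h₁
  rw [← isAlgebraic_ratFunc_iff_isAlgebraic_adjoin hx₂] at h₂
  exact isAlgebraic_of_range_inf_le (ratFunc_range_inf_le hrange) h₁ h₂

end RationalFunctions

/-- The Ingleton–Main property, an obstruction to a matroid being algebraic. Ingleton and Main
concern concurrent lines; here `S` and `T` are arbitrary sets, and `x` and `y` span the
third line. -/
def IngletonMain {α : Type*} (M : Matroid α) : Prop :=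
  ∀ ⦃S T : Set α⦄ ⦃x y : α⦄, x ∈ M.E \ M.closure (S ∪ T) → y ∈ M.closure (insert x S) →
    y ∈ M.closure (insert x T) → y ∈ M.closure (insert x (M.closure S ∩ M.closure T))

section AlgebraicMatroid
variable {k K : Type*} [Field k] [Field K] [Algebra k K]

theorem mem_matroid_closure_iff {S : Set K} {z : K} :
    z ∈ (AlgebraicIndependent.matroid k K).closure S ↔ IsAlgebraic (Algebra.adjoin k S) z := by
  rw [AlgebraicIndependent.matroid_closure_eq, SetLike.mem_coe, Subalgebra.mem_algebraicClosure]

theorem mem_matroid_closure_insert_iff (L : IntermediateField k K) {x y : K} :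
    y ∈ (AlgebraicIndependent.matroid k K).closure (insert x (L : Set K)) ↔
      IsAlgebraic (Algebra.adjoin L {x}) y := by
  rw [mem_matroid_closure_iff, Set.insert_eq, Set.union_comm, ← L.coe_toSubalgebra,
    ← Algebra.restrictScalars_adjoin k]
  rfl

variable (k) in
theorem exists_intermediateField_eq_closure (S : Set K) :
    ∃ L : IntermediateField k K, (L : Set K) = (AlgebraicIndependent.matroid k K).closure S ∧
      IsIntegrallyClosedIn L K := by
  obtain ⟨A, hA, hA'⟩ := AlgebraicIndependent.matroid_isFlat_iff.mp
    ((AlgebraicIndependent.matroid k K).isFlat_closure S)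
  rw [← hA] at hA'
  exact ⟨A.toIntermediateField fun z hz => hA' _ (isAlgebraic_algebraMap (⟨z, hz⟩ : A)).inv, hA,
    isIntegrallyClosedIn_iff.mpr
      ⟨Subtype.val_injective, fun hz => ⟨⟨_, hA' _ hz.isAlgebraic⟩, rfl⟩⟩⟩

theorem ingletonMain_matroid : IngletonMain (AlgebraicIndependent.matroid k K) := by
  rintro S T x y ⟨-, hx⟩ hyS hyT
  obtain ⟨L₁, hL₁, hclosed₁⟩ := exists_intermediateField_eq_closure k S
  obtain ⟨L₂, hL₂, hclosed₂⟩ := exists_intermediateField_eq_closure k T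
  obtain ⟨D, hD, hclosed⟩ := exists_intermediateField_eq_closure k (S ∪ T)
  have h₁ : L₁ ≤ D := SetLike.coe_subset_coe.mp <| by
    rw [hL₁, hD]; exact Matroid.closure_subset_closure _ Set.subset_union_left
  have h₂ : L₂ ≤ D := SetLike.coe_subset_coe.mp <| by
    rw [hL₂, hD]; exact Matroid.closure_subset_closure _ Set.subset_union_right
  have hxD : Transcendental D x := fun h => hx <| by
    obtain ⟨d, rfl⟩ := (isIntegrallyClosedIn_iff.mp hclosed).2 h.isIntegral
    exact hD ▸ d.2
  rw [← Matroid.closure_insert_closure_eq_closure_insert, ← hL₁,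
    mem_matroid_closure_insert_iff] at hyS
  rw [← Matroid.closure_insert_closure_eq_closure_insert, ← hL₂,
    mem_matroid_closure_insert_iff] at hyT
  rw [← hL₁, ← hL₂, ← IntermediateField.coe_inf, mem_matroid_closure_insert_iff]
  let _ := (IntermediateField.inclusion h₁).toAlgebra
  let _ := (IntermediateField.inclusion h₂).toAlgebra
  let _ := (IntermediateField.inclusion (inf_le_left.trans h₁ : L₁ ⊓ L₂ ≤ D)).toAlgebra
  have : IsScalarTower L₁ D K := .of_algebraMap_eq' rfl
  have : IsScalarTower L₂ D K := .of_algebraMap_eq' rfl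
  have : IsScalarTower ↥(L₁ ⊓ L₂) D K := .of_algebraMap_eq' rfl
  have := (IsScalarTower.toAlgHom L₁ D K).isIntegrallyClosedIn Subtype.val_injective hclosed₁
  have := (IsScalarTower.toAlgHom L₂ D K).isIntegrallyClosedIn Subtype.val_injective hclosed₂
  refine isAlgebraic_adjoin_of_range_inf_le ?_ hxD hyS hyT
  rintro _ ⟨⟨a, rfl⟩, b, hb⟩
  have hba : (b : K) = a := congrArg Subtype.val hb
  exact ⟨⟨a, a.2, hba ▸ b.2⟩, rfl⟩

end AlgebraicMatroid

section Lines
variable {α : Type*} {M : Matroid α} {a b c d p w x y u v : α}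

theorem closure_eq_closure_of_indep_of_subset_closure {I X : Set α} (hI : M.Indep I)
    (hfin : I.Finite) (hIX : I ⊆ M.closure X) (hcard : X.encard ≤ I.encard) :
    M.closure I = M.closure X := by
  rw [← M.closure_closure X]
  refine Matroid.IsRkFinite.closure_eq_closure_of_subset_of_eRk_ge_eRk (M.isRkFinite_of_finite hfin)
    hIX ?_
  rw [M.eRk_closure_eq, hI.eRk_eq_encard]
  exact (M.eRk_le_encard X).trans hcard

theorem closure_pair_eq (hp : M.IsNonloop p) (hw : w ∉ M.closure {p})
    (hpab : p ∈ M.closure {a, b}) (hwab : w ∈ M.closure {a, b}) :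
    M.closure {w, p} = M.closure {a, b} := by
  have hwp : w ≠ p := fun h => hw (h ▸ M.mem_closure_self p)
  refine closure_eq_closure_of_indep_of_subset_closure ?_ (Set.toFinite _)
    (Set.insert_subset hwab (Set.singleton_subset_iff.mpr hpab)) ?_
  · exact (hp.indep.insert_indep_iff_of_notMem (by simpa using hwp)).mpr
      ⟨M.mem_ground_of_mem_closure hwab, hw⟩
  · rw [Set.encard_pair hwp]
    exact (Set.encard_insert_le {b} a).trans (by rw [Set.encard_singleton, one_add_one_eq_two])

theorem mem_closure_singleton_of_mem_closure_pair (hne : M.closure {a, b} ≠ M.closure {c, d})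
    (hp : M.IsNonloop p) (hpab : p ∈ M.closure {a, b}) (hpcd : p ∈ M.closure {c, d})
    (hwab : w ∈ M.closure {a, b}) (hwcd : w ∈ M.closure {c, d}) : w ∈ M.closure {p} := by
  by_contra hw
  exact hne ((closure_pair_eq hp hw hpab hwab).symm.trans (closure_pair_eq hp hw hpcd hwcd))

theorem mem_closure_insert_of_notMem_closure {X : Set α} (hp : M.IsNonloop p)
    (hpuv : p ∈ M.closure {u, v}) (hpX : p ∈ M.closure X) (hu : u ∉ M.closure X) :
    v ∈ M.closure {p, u} := by
  refine M.mem_closure_insert (fun hpu => hu ?_) (Set.pair_comm u v ▸ hpuv)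
  exact M.closure_subset_closure_of_subset_closure (Set.singleton_subset_iff.mpr hpX)
    (hp.mem_closure_singleton hpu)

theorem IngletonMain.exists_isNonloop_mem_closure_pair (hM : IngletonMain M)
    (hx : x ∈ M.E \ M.closure {a, b, c, d}) (hyab : y ∈ M.closure {x, a, b})
    (hycd : y ∈ M.closure {x, c, d}) (hy : y ∉ M.closure {x})
    (hne : M.closure {a, b} ≠ M.closure {c, d}) :
    ∃ p, M.IsNonloop p ∧ p ∈ M.closure {a, b} ∧ p ∈ M.closure {c, d} ∧ p ∈ M.closure {x, y} := by
  have hunion : ({a, b} ∪ {c, d} : Set α) = {a, b, c, d} := Set.insert_union ..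
  have hyx := hM (hunion ▸ hx) hyab hycd
  obtain ⟨p, ⟨hpab, hpcd⟩, hp⟩ : ∃ p ∈ M.closure {a, b} ∩ M.closure {c, d}, M.IsNonloop p := by
    by_contra! hloops
    refine hy (M.closure_subset_closure_of_subset_closure
      (Set.insert_subset (M.mem_closure_self x hx.1) fun w hw => ?_) hyx)
    have hwE := M.mem_ground_of_mem_closure hw.1
    exact (M.not_isNonloop_iff.mp (hloops w hw)).mem_closure _
  refine ⟨p, hp, hpab, hpcd, ?_⟩
  have hyp : y ∈ M.closure {p, x} := by
    refine M.closure_subset_closure_of_subset_closure ?_ hyx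
    refine Set.insert_subset (M.mem_closure_of_mem' (by simp) hx.1) fun w hw => ?_
    exact M.closure_subset_closure (by simp)
      (mem_closure_singleton_of_mem_closure_pair hne hp hpab hpcd hw.1 hw.2)
  exact Set.pair_comm y x ▸ M.mem_closure_insert hy hyp

end Lines

section Mk
variable {k : ℕ} {α : Type*} {M : Matroid α}

instance (k : ℕ) : DecidablePred (· ∈ Hfam k) := fun _ =>
  inferInstanceAs (Decidable (∃ i j : Fin k, i < j ∧ _))

theorem image_mem_Hfam_iff {m : ℕ} {n : Fin m → Fin k} (hn : StrictMono n)
    (hends : ∀ i j, ((n i : ℕ) = 0 ∧ (n j : ℕ) = k - 1) ↔ ((i : ℕ) = 0 ∧ (j : ℕ) = m - 1))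
    {I : Finset (Fin 3 × Fin m)} : I.image (Prod.map id n) ∈ Hfam k ↔ I ∈ Hfam m := by
  have hinj : Function.Injective (Finset.image (Prod.map (id : Fin 3 → Fin 3) n)) :=
    Finset.image_injective (Function.injective_id.prodMap hn.injective)
  have himage (s t : Fin 3) (i j : Fin m) :
      ({(s, n i), (s, n j), (t, n i), (t, n j)} : Finset (Fin 3 × Fin k)) =
        Finset.image (Prod.map id n) {(s, i), (s, j), (t, i), (t, j)} := by
    simp only [Finset.image_insert, Finset.image_singleton, Prod.map_apply, id_eq]
  constructor
  · rintro ⟨i, j, hij, hI⟩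
    have hcolumn (l : Fin k) (hl : l = i ∨ l = j) : ∃ l', n l' = l := by
      obtain ⟨s, hs⟩ : ∃ s : Fin 3, (s, l) ∈ I.image (Prod.map id n) := by
        rcases hI with hI | ⟨hI, -⟩ | hI
        exacts [⟨0, by simp [hI, hl]⟩, ⟨0, by simp [hI, hl]⟩, ⟨1, by simp [hI, hl]⟩]
      obtain ⟨u, -, hu⟩ := Finset.mem_image.mp hs
      exact ⟨u.2, congrArg Prod.snd hu⟩
    obtain ⟨i, rfl⟩ := hcolumn _ (.inl rfl)
    obtain ⟨j, rfl⟩ := hcolumn _ (.inr rfl)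
    simp only [himage, hinj.eq_iff, hends] at hI
    exact ⟨i, j, hn.lt_iff_lt.mp hij, hI⟩
  · rintro ⟨i, j, hij, hI⟩
    refine ⟨n i, n j, hn hij, ?_⟩
    simpa only [himage, hinj.eq_iff, hends] using hI

/-- The map `e` realises the matroid `M_k` as a restriction of `M`. -/
structure IsMkEmbedding (k : ℕ) (M : Matroid α) (e : Fin 3 × Fin k → α) : Prop where
  injective : Function.Injective e
  indep_image_iff : ∀ I : Finset (Fin 3 × Fin k), M.Indep (e '' I) ↔ MkIndep k I

namespace IsMkEmbedding

theorem comp_columns {m : ℕ} {e : Fin 3 × Fin k → α} (he : IsMkEmbedding k M e)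
    {n : Fin m → Fin k} (hn : StrictMono n)
    (hends : ∀ i j, ((n i : ℕ) = 0 ∧ (n j : ℕ) = k - 1) ↔ ((i : ℕ) = 0 ∧ (j : ℕ) = m - 1)) :
    IsMkEmbedding m M (e ∘ Prod.map id n) where
  injective := he.injective.comp (Function.injective_id.prodMap hn.injective)
  indep_image_iff I := by
    rw [Set.image_comp, ← Finset.coe_image, he.indep_image_iff, MkIndep, MkIndep,
      image_mem_Hfam_iff hn hends,
      Finset.card_image_of_injective _ (Function.injective_id.prodMap hn.injective)]

section Closure
variable {e : Fin 3 × Fin k → α} {u v w z : Fin 3 × Fin k}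
  {r s t : Fin 3} {i j : Fin k} {p : α}

theorem mem_ground (he : IsMkEmbedding k M e) (u : Fin 3 × Fin k) : e u ∈ M.E :=
  ((he.indep_image_iff {u}).mpr (.inl (by simp))).subset_ground (by simp)

theorem notMem_closure_pair (he : IsMkEmbedding k M e) (huv : u ≠ v) (huw : u ≠ w) :
    e u ∉ M.closure {e v, e w} := by
  have hindep := (he.indep_image_iff {u, v, w}).mpr (.inl Finset.card_le_three)
  have hpair := (he.indep_image_iff {v, w}).mpr (.inl (Finset.card_le_two.trans (by norm_num)))
  simp only [Finset.coe_insert, Finset.coe_singleton, Set.image_insert_eq, Set.image_singleton]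
    at hindep hpair
  rw [hpair.insert_indep_iff_of_notMem (by simp [he.injective.eq_iff, huv, huw])] at hindep
  exact hindep.2

theorem notMem_closure_singleton (he : IsMkEmbedding k M e) (huv : u ≠ v) :
    e u ∉ M.closure {e v} := fun h =>
  he.notMem_closure_pair huv huv (M.closure_subset_closure (by simp) h)

theorem mem_closure_triple_iff (he : IsMkEmbedding k M e)
    (hcard : ({u, v, w, z} : Finset (Fin 3 × Fin k)).card = 4) :
    e u ∈ M.closure {e v, e w, e z} ↔ {u, v, w, z} ∈ Hfam k := by
  have hu : u ∉ ({v, w, z} : Finset (Fin 3 × Fin k)) := fun hu => by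
    have := Finset.card_le_three (a := v) (b := w) (c := z)
    rw [Finset.insert_eq_of_mem hu] at hcard
    lia
  have hquad := he.indep_image_iff {u, v, w, z}
  have htriple := (he.indep_image_iff {v, w, z}).mpr (.inl Finset.card_le_three)
  simp only [Finset.coe_insert, Finset.coe_singleton, Set.image_insert_eq, Set.image_singleton]
    at hquad htriple
  rw [htriple.insert_indep_iff_of_notMem (by simpa [he.injective.eq_iff] using hu), MkIndep, hcard,
    Set.mem_sdiff, and_iff_right (he.mem_ground u), or_iff_right (by norm_num),
    and_iff_right rfl] at hquad
  exact not_iff_not.mp hquad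

theorem closure_pair_ne (he : IsMkEmbedding k M e) (hij : i ≠ j) :
    M.closure {e (s, i), e (t, i)} ≠ M.closure {e (s, j), e (t, j)} := fun h =>
  he.notMem_closure_pair (u := (s, i)) (v := (s, j)) (w := (t, j)) (by simp [hij]) (by simp [hij])
    (h ▸ M.mem_closure_of_mem' (by simp) (he.mem_ground _))

theorem mem_closure_triple_of_mem_Hfam (he : IsMkEmbedding k M e) (hst : s ≠ t) (hij : i ≠ j)
    (hmem : {(s, i), (s, j), (t, i), (t, j)} ∈ Hfam k) :
    e (t, j) ∈ M.closure {e (s, i), e (t, i), e (s, j)} := by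
  have hquad : ({(t, j), (s, i), (t, i), (s, j)} : Finset (Fin 3 × Fin k)) =
      {(s, i), (s, j), (t, i), (t, j)} := by grind
  refine (he.mem_closure_triple_iff ?_).mpr (hquad ▸ hmem)
  simp [Finset.card_insert_of_notMem, hst, hst.symm, hij, hij.symm]

theorem closure_quad_eq (he : IsMkEmbedding k M e) (hst : s ≠ t) (hij : i ≠ j)
    (hmem : {(s, i), (s, j), (t, i), (t, j)} ∈ Hfam k) :
    M.closure {e (s, i), e (t, i), e (s, j), e (t, j)} =
      M.closure {e (s, i), e (t, i), e (s, j)} := by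
  rw [← Matroid.closure_insert_eq_of_mem_closure (he.mem_closure_triple_of_mem_Hfam hst hij hmem)]
  congr 1
  grind

theorem mem_closure_of_mem_closure_pairs (he : IsMkEmbedding k M e) (hp : M.IsNonloop p)
    (hpi : p ∈ M.closure {e (s, i), e (t, i)}) (hpj : p ∈ M.closure {e (s, j), e (t, j)})
    (hij : i ≠ j) {X : Set α} (hpX : p ∈ M.closure X) (hsX : e (s, i) ∈ M.closure X) :
    e (t, i) ∈ M.closure X :=
  M.closure_subset_closure_of_subset_closure (Set.pair_subset hpX hsX) <|
    mem_closure_insert_of_notMem_closure hp hpi hpj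
      (he.notMem_closure_pair (by simp [hij]) (by simp [hij]))

theorem notMem_closure_pair_of_mem_closure_pairs (he : IsMkEmbedding k M e) (hp : M.IsNonloop p)
    (hpi : p ∈ M.closure {e (s, i), e (t, i)}) (hpj : p ∈ M.closure {e (s, j), e (t, j)})
    (hij : i ≠ j) (hst : s ≠ t) (htr : t ≠ r) : p ∉ M.closure {e (s, i), e (r, i)} := fun h =>
  he.notMem_closure_pair (by simp [hst.symm]) (by simp [htr]) <|
    he.mem_closure_of_mem_closure_pairs hp hpi hpj hij h
      (M.mem_closure_of_mem' (by simp) (he.mem_ground _))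

end Closure

section ThreeColumns
variable {e : Fin 3 × Fin 3 → α} {s t i j : Fin 3} {p q : α}

theorem exists_isNonloop_forall_mem_closure_pair (hM : IngletonMain M)
    (he : IsMkEmbedding 3 M e) (hst : s ≠ t)
    (hmem : ∀ i j, i ≠ j → {(s, i), (s, j), (t, i), (t, j)} ∈ Hfam 3) :
    ∃ p, M.IsNonloop p ∧ ∀ i, p ∈ M.closure {e (s, i), e (t, i)} := by
  have hcoplanar (i : Fin 3) (hi : i ≠ 2) :
      e (t, 2) ∈ M.closure {e (s, 2), e (s, i), e (t, i)} :=
    M.closure_subset_closure (by grind)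
      (he.mem_closure_triple_of_mem_Hfam hst hi (hmem i 2 hi))
  have hcolumns : ∀ s t : Fin 3, s ≠ t →
      ({(s, 2), (s, 0), (t, 0), (s, 1)} : Finset (Fin 3 × Fin 3)).card = 4 ∧
        {(s, 2), (s, 0), (t, 0), (s, 1)} ∉ Hfam 3 := by decide
  have hspan : e (s, 2) ∉ M.closure {e (s, 0), e (t, 0), e (s, 1), e (t, 1)} := by
    rw [he.closure_quad_eq hst (by decide) (hmem 0 1 (by decide)),
      he.mem_closure_triple_iff (hcolumns s t hst).1]
    exact (hcolumns s t hst).2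
  obtain ⟨p, hp, hp₀, hp₁, hp₂⟩ := hM.exists_isNonloop_mem_closure_pair
    ⟨he.mem_ground _, hspan⟩ (hcoplanar 0 (by decide)) (hcoplanar 1 (by decide))
    (he.notMem_closure_singleton (by simp [hst.symm])) (he.closure_pair_ne (by decide))
  exact ⟨p, hp, Fin.forall_fin_succ.mpr ⟨hp₀, Fin.forall_fin_two.mpr ⟨hp₁, hp₂⟩⟩⟩

theorem exists_isNonloop_mem_closure_pair (hM : IngletonMain M) (he : IsMkEmbedding 3 M e)
    (hp : M.IsNonloop p) (hpi : ∀ i, p ∈ M.closure {e (0, i), e (1, i)})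
    (hqi : ∀ i, q ∈ M.closure {e (1, i), e (2, i)}) (hqp : q ∉ M.closure {p}) (hij : i ≠ j)
    (hmem : {(0, i), (0, j), (2, i), (2, j)} ∈ Hfam 3) :
    ∃ r, M.IsNonloop r ∧ r ∈ M.closure {e (0, i), e (2, i)} ∧
      r ∈ M.closure {e (0, j), e (2, j)} ∧ r ∈ M.closure {p, q} := by
  have hcoplanar {i j : Fin 3} (hij : i ≠ j) : q ∈ M.closure {p, e (0, i), e (2, i)} :=
    M.closure_subset_closure_of_subset_closure (Set.pair_subset
      (he.mem_closure_of_mem_closure_pairs hp (hpi i) (hpi j) hij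
        (M.mem_closure_of_mem' (by simp) hp.mem_ground)
        (M.mem_closure_of_mem' (by simp) (he.mem_ground _)))
      (M.mem_closure_of_mem' (by simp) (he.mem_ground _))) (hqi i)
  have hrows : ∀ i j : Fin 3, i ≠ j →
      ({(1, i), (0, i), (2, i), (0, j)} : Finset (Fin 3 × Fin 3)).card = 4 ∧
        {(1, i), (0, i), (2, i), (0, j)} ∉ Hfam 3 := by decide
  have hspan : p ∉ M.closure {e (0, i), e (2, i), e (0, j), e (2, j)} := fun h => by
    rw [he.closure_quad_eq (by decide) hij hmem] at h
    have hbi : e (1, i) ∈ M.closure {e (0, i), e (2, i), e (0, j)} :=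
      he.mem_closure_of_mem_closure_pairs hp (hpi i) (hpi j) hij h
        (M.mem_closure_of_mem' (by simp) (he.mem_ground _))
    rw [he.mem_closure_triple_iff (hrows i j hij).1] at hbi
    exact (hrows i j hij).2 hbi
  exact hM.exists_isNonloop_mem_closure_pair ⟨hp.mem_ground, hspan⟩ (hcoplanar hij)
    (hcoplanar hij.symm) hqp (he.closure_pair_ne hij)

end ThreeColumns

theorem not_ingletonMain_three {e : Fin 3 × Fin 3 → α} (he : IsMkEmbedding 3 M e) :
    ¬ IngletonMain M := fun hM => by
  obtain ⟨p, hp, hpi⟩ :=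
    he.exists_isNonloop_forall_mem_closure_pair hM (s := 0) (t := 1) (by decide) (by decide)
  obtain ⟨q, hq, hqi⟩ :=
    he.exists_isNonloop_forall_mem_closure_pair hM (s := 1) (t := 2) (by decide) (by decide)
  have hqp : q ∉ M.closure {p} := fun h =>
    he.notMem_closure_pair_of_mem_closure_pairs hq (hqi 0) (hqi 1) (by decide) (by decide)
      (by decide) <| Set.pair_comm (e (0, 0)) (e (1, 0)) ▸
        M.closure_subset_closure_of_subset_closure (Set.singleton_subset_iff.mpr (hpi 0)) h
  obtain ⟨r, hr, hr₀, hr₁, hrpq⟩ := he.exists_isNonloop_mem_closure_pair hM hp hpi hqi hqp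
    (i := 0) (j := 1) (by decide) (by decide)
  obtain ⟨s, hs, hs₁, hs₂, hspq⟩ := he.exists_isNonloop_mem_closure_pair hM hp hpi hqi hqp
    (i := 1) (j := 2) (by decide) (by decide)
  have hp₁ : p ∉ M.closure {e (0, 1), e (2, 1)} :=
    he.notMem_closure_pair_of_mem_closure_pairs hp (hpi 1) (hpi 0) (by decide) (by decide)
      (by decide)
  have hne : M.closure {e (0, 1), e (2, 1)} ≠ M.closure {p, q} := fun h =>
    hp₁ (h ▸ M.mem_closure_of_mem' (by simp) hp.mem_ground)
  have hrs : r ∈ M.closure {s} :=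
    mem_closure_singleton_of_mem_closure_pair hne hs hs₁ hspq hr₁ hrpq
  have hr₂ : r ∈ M.closure {e (0, 2), e (2, 2)} :=
    M.closure_subset_closure_of_subset_closure (Set.singleton_subset_iff.mpr hs₂) hrs
  have hmissing : e (2, 0) ∈ M.closure {e (0, 0), e (0, 2), e (2, 2)} :=
    he.mem_closure_of_mem_closure_pairs hr hr₀ hr₁ (by decide)
      (M.closure_subset_closure (by grind) hr₂)
      (M.mem_closure_of_mem' (by simp) (he.mem_ground _))
  rw [he.mem_closure_triple_iff (by decide)] at hmissing
  exact absurd hmissing (by decide)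

theorem not_ingletonMain {e : Fin 3 × Fin k → α} (he : IsMkEmbedding k M e) (hk : 3 ≤ k) :
    ¬ IngletonMain M := by
  let n : Fin 3 → Fin k := ![⟨0, by lia⟩, ⟨1, by lia⟩, ⟨k - 1, by lia⟩]
  have hn : StrictMono n := fun i j => by
    fin_cases i <;> fin_cases j <;> simp [n] <;> lia
  refine (he.comp_columns hn fun i j => ?_).not_ingletonMain_three
  fin_cases i <;> fin_cases j <;> simp [n] <;> lia

end IsMkEmbedding

end Mk

/-- For every `k ≥ 3` the matroid `M_k` is not algebraic. -/
theorem Mk_not_algebraic (k : ℕ) (hk : 3 ≤ k) :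
    ∀ (k' K : Type*) [Field k'] [Field K] [Algebra k' K] (σ : Fin 3 × Fin k → K),
      Function.Injective σ →
      ¬ (∀ I : Finset (Fin 3 × Fin k),
          MkIndep k I ↔ AlgebraicIndependent k' (fun e : {x // x ∈ I} => σ e.1)) := by
  intro k' K _ _ _ σ hσ h
  have he : IsMkEmbedding k (AlgebraicIndependent.matroid k' K) σ := ⟨hσ, fun I => by
    rw [h I, AlgebraicIndependent.matroid_indep_iff]
    exact algebraicIndependent_image hσ.injOn |>.symm⟩
  exact he.not_ingletonMain hk ingletonMain_matroid
end

section
/- For every integer k ≥ 3 and every m with 2 ≤ m ≤ k−1, the restriction of M_k to the nine-element set {a_1, a_m, a_k, b_1, b_m, b_k, c_1, c_m, c_k} is isomorphic to M_3 via the bijection sending a_1 ↦ a_1, a_m ↦ a_2, a_k ↦ a_3, b_1 ↦ b_1, b_m ↦ b_2, b_k ↦ b_3, c_1 ↦ c_1, c_m ↦ c_2, c_k ↦ c_3 (i.e., a set is independent in the restriction if and only if its image is independent in M_3). -/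
/-- The map sending `a_1 ↦ a_1, a_m ↦ a_2, a_k ↦ a_3` (and likewise on the `b`- and
`c`-rows), from the ground set of `M_k` to the ground set of `M_3`. -/
def phi (k : ℕ) (m : Fin k) : Fin 3 × Fin k → Fin 3 × Fin 3 :=
  fun p => (p.1, if (p.2 : ℕ) = 0 then 0 else if p.2 = m then 1 else 2)

/-!
Each circuit-hyperplane is a product of two rows and two columns, so a strictly increasing choice
of columns carries circuit-hyperplanes to circuit-hyperplanes and reflects them, provided the
excluded pair (first column, last column) corresponds to the excluded pair. Choosing the columns
`1, m, k` gives a one-sided inverse of `phi` whose range is the nine-element set.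
-/

section Columns

variable {k l : ℕ}

theorem pair_product_pair {α β : Type*} [DecidableEq α] [DecidableEq β] (r s : α) (i j : β) :
    ({r, s} : Finset α) ×ˢ ({i, j} : Finset β) = {(r, i), (r, j), (s, i), (s, j)} := by
  ext ⟨a, b⟩
  simp only [Finset.mem_product, Finset.mem_insert, Finset.mem_singleton, Prod.mk.injEq]
  tauto

theorem mem_Hfam_iff {H : Finset (Fin 3 × Fin k)} :
    H ∈ Hfam k ↔ ∃ r s : Fin 3, r < s ∧ ∃ i j : Fin k, i < j ∧
      H = ({r, s} : Finset (Fin 3)) ×ˢ {i, j} ∧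
      ¬((r = 0 ∧ s = 2) ∧ (i : ℕ) = 0 ∧ (j : ℕ) = k - 1) := by
  simp only [Hfam, Set.mem_ofPred_eq, pair_product_pair]
  constructor
  · rintro ⟨i, j, hij, hH | ⟨hH, hends⟩ | hH⟩
    · exact ⟨0, 1, by decide, i, j, hij, hH, by simp⟩
    · exact ⟨0, 2, by decide, i, j, hij, hH, fun h => hends h.2⟩
    · exact ⟨1, 2, by decide, i, j, hij, hH, by simp⟩
  · rintro ⟨r, s, hrs, i, j, hij, hH, hends⟩
    refine ⟨i, j, hij, ?_⟩
    obtain ⟨rfl, rfl⟩ | ⟨rfl, rfl⟩ | ⟨rfl, rfl⟩ :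
        (r = 0 ∧ s = 1) ∨ (r = 0 ∧ s = 2) ∨ (r = 1 ∧ s = 2) := by lia
    · exact Or.inl hH
    · exact Or.inr (Or.inl ⟨hH, fun h => hends ⟨⟨rfl, rfl⟩, h⟩⟩)
    · exact Or.inr (Or.inr hH)

theorem subset_range_of_image_prodMap_eq_product {α β γ δ : Type*} [DecidableEq γ] [DecidableEq δ]
    {f : α → γ} {g : β → δ} {H : Finset (α × β)} {s : Finset γ} {t : Finset δ}
    (hs : s.Nonempty) (hH : H.image (Prod.map f g) = s ×ˢ t) : ↑t ⊆ Set.range g := by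
  intro b hb
  obtain ⟨a, ha⟩ := hs
  have hab : (a, b) ∈ H.image (Prod.map f g) := hH ▸ Finset.mk_mem_product ha hb
  obtain ⟨p, -, hp⟩ := Finset.mem_image.mp hab
  exact ⟨p.2, congrArg Prod.snd hp⟩

theorem image_prodMap_mem_Hfam_iff {e : Fin l → Fin k} (he : StrictMono e)
    (hends : ∀ ⦃i j⦄, i < j →
      ((e i : ℕ) = 0 ∧ (e j : ℕ) = k - 1 ↔ (i : ℕ) = 0 ∧ (j : ℕ) = l - 1))
    {H : Finset (Fin 3 × Fin l)} : H.image (Prod.map id e) ∈ Hfam k ↔ H ∈ Hfam l := by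
  have image_product_pair (r s : Fin 3) (i j : Fin l) :
      (({r, s} : Finset (Fin 3)) ×ˢ ({i, j} : Finset (Fin l))).image (Prod.map id e) =
        ({r, s} : Finset (Fin 3)) ×ˢ {e i, e j} := by
    simp [Finset.prodMap_image_product, Finset.image_insert]
  have he_prod : Function.Injective (Prod.map (id : Fin 3 → Fin 3) e) :=
    Function.injective_id.prodMap he.injective
  simp only [mem_Hfam_iff]
  constructor
  · rintro ⟨r, s, hrs, i', j', hij, hH, hne⟩
    have hcols := subset_range_of_image_prodMap_eq_product (Finset.insert_nonempty r {s}) hH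
    obtain ⟨i, rfl⟩ := hcols (show i' ∈ _ by simp)
    obtain ⟨j, rfl⟩ := hcols (show j' ∈ _ by simp)
    rw [he.lt_iff_lt] at hij
    rw [← image_product_pair] at hH
    exact ⟨r, s, hrs, i, j, hij, Finset.image_injective he_prod hH, by rwa [← hends hij]⟩
  · rintro ⟨r, s, hrs, i, j, hij, rfl, hne⟩
    exact ⟨r, s, hrs, e i, e j, he hij, image_product_pair r s i j, by rwa [hends hij]⟩

theorem mkIndep_image_prodMap_iff {e : Fin l → Fin k} (he : StrictMono e)
    (hends : ∀ ⦃i j⦄, i < j →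
      ((e i : ℕ) = 0 ∧ (e j : ℕ) = k - 1 ↔ (i : ℕ) = 0 ∧ (j : ℕ) = l - 1))
    {I : Finset (Fin 3 × Fin l)} : MkIndep k (I.image (Prod.map id e)) ↔ MkIndep l I := by
  rw [MkIndep, MkIndep, image_prodMap_mem_Hfam_iff he hends,
    Finset.card_image_of_injective _ (Function.injective_id.prodMap he.injective)]

theorem phi_leftInverse_prodMap {e : Fin 3 → Fin k} (he : Function.Injective e)
    (he0 : (e 0 : ℕ) = 0) : Function.LeftInverse (phi k (e 1)) (Prod.map id e) := by
  have hzero (c : Fin 3) : (e c : ℕ) = 0 ↔ c = 0 := by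
    rw [← he0, Fin.val_inj, he.eq_iff]
  rintro ⟨r, c⟩
  simp only [phi, Prod.map_apply, id_eq, hzero, he.eq_iff]
  fin_cases c <;> rfl

end Columns

/-- For `k ≥ 3` and `2 ≤ m ≤ k - 1` (one-based; here `m` is zero-based with
`m ≠ 0` and `m ≠ k - 1`), the restriction of `M_k` to the nine elements
`{a_1, a_m, a_k, b_1, b_m, b_k, c_1, c_m, c_k}` is isomorphic to `M_3` via `phi`:
`phi` is injective on these nine elements and a subset of them is independent in `M_k`
iff its image is independent in `M_3`. -/
theorem Mk_restriction_iso_M3 (k : ℕ) (hk : 3 ≤ k) (m i0 ik : Fin k)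
    (hm0 : (m : ℕ) ≠ 0) (hmk : (m : ℕ) ≠ k - 1)
    (hi0 : (i0 : ℕ) = 0) (hik : (ik : ℕ) = k - 1) :
    Set.InjOn (phi k m)
      ↑({(0, i0), (0, m), (0, ik), (1, i0), (1, m), (1, ik), (2, i0), (2, m), (2, ik)} :
        Finset (Fin 3 × Fin k)) ∧
    ∀ I : Finset (Fin 3 × Fin k),
      I ⊆ ({(0, i0), (0, m), (0, ik), (1, i0), (1, m), (1, ik), (2, i0), (2, m), (2, ik)} :
        Finset (Fin 3 × Fin k)) →
      (MkIndep k I ↔ MkIndep 3 (I.image (phi k m))) := by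
  let e : Fin 3 → Fin k := ![i0, m, ik]
  have hi0m : i0 < m := by lia
  have hmik : m < ik := by lia
  have he : StrictMono e := by simp [e, hi0m, hmik]
  have hends ⦃i j : Fin 3⦄ (_ : i < j) :
      (e i : ℕ) = 0 ∧ (e j : ℕ) = k - 1 ↔ (i : ℕ) = 0 ∧ (j : ℕ) = 3 - 1 := by
    fin_cases i <;> fin_cases j <;> simp [e] <;> lia
  have hphi : Function.LeftInverse (phi k m) (Prod.map id e) :=
    phi_leftInverse_prodMap he.injective hi0
  have hrange : ↑({(0, i0), (0, m), (0, ik), (1, i0), (1, m), (1, ik), (2, i0), (2, m), (2, ik)} :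
      Finset (Fin 3 × Fin k)) ⊆ Set.range (Prod.map (id : Fin 3 → Fin 3) e) := by
    simp [Set.insert_subset_iff, e]
  refine ⟨(hphi.rightInvOn_range.mono hrange).injOn, fun I hI => ?_⟩
  obtain ⟨J, -, rfl⟩ := Finset.subset_set_image_iff.mp
    (((Finset.coe_subset.mpr hI).trans hrange).trans Set.image_univ.superset)
  rw [Finset.image_image, hphi.comp_eq_id, Finset.image_id]
  exact mkIndep_image_prodMap_iff he hends
end
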